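/- arXiv:0708.2510 — 2 statements merged into one kernel-verified Lean document; each statement's English description precedes it below -/
import Mathlib

section
/- Let H be a complex Hilbert space, J a signature operator on H, L a densely defined positive self-adjoint operator in H, and B := JL. Assume B is similar to a self-adjoint operator in H. Then for every φ₊ ∈ H₊ there exists a unique function ψ : [0, ∞) → H which is continuous on [0, ∞), continuously differentiable on (0, ∞), satisfies ψ(x) ∈ dom B and ψ′(x) = −Bψ(x) for all x > 0, satisfies P₊ψ(0) = φ₊, and satisfies ‖ψ(x)‖ → 0 as x → +∞. -/
open scoped ComplexOrder InnerProductSpace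

noncomputable section

variable {H : Type*} [NormedAddCommGroup H] [InnerProductSpace ℂ H] [CompleteSpace H]

/-- `J` is a signature operator: `J = J* = J⁻¹`. -/
def IsSignatureOperator (J : H →L[ℂ] H) : Prop :=
  IsSelfAdjoint J ∧ J.comp J = ContinuousLinearMap.id ℂ H

/-- The orthogonal projection onto `H₊ = ker (J - I)`, which equals `(I + J)/2`
for a signature operator `J`. -/
def Pplus (J : H →L[ℂ] H) : H →L[ℂ] H := (2⁻¹ : ℂ) • (ContinuousLinearMap.id ℂ H + J)

/-- The orthogonal projection onto `H₋ = ker (J + I)`, which equals `(I - J)/2`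
for a signature operator `J`. -/
def Pminus (J : H →L[ℂ] H) : H →L[ℂ] H := (2⁻¹ : ℂ) • (ContinuousLinearMap.id ℂ H - J)

/-- The composition `J ∘ L` of a bounded operator `J` with an unbounded operator `L`,
as an unbounded operator with the same domain as `L`. -/
def pmapComp (J : H →L[ℂ] H) (L : H →ₗ.[ℂ] H) : H →ₗ.[ℂ] H :=
  { domain := L.domain
    toFun := (J : H →ₗ[ℂ] H).comp L.toFun }

/-- `L` is a positive operator: `⟨L h, h⟩ > 0` for every nonzero `h ∈ dom L`. -/
def IsPositivePMap (L : H →ₗ.[ℂ] H) : Prop :=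
  ∀ h : L.domain, (h : H) ≠ 0 → 0 < ⟪L h, (h : H)⟫_ℂ

/-- `B` is similar to a self-adjoint operator: there is a bounded operator `S` with bounded
inverse mapping `dom B` onto the domain of a self-adjoint operator `A` such that
`A (S h) = S (B h)` for all `h ∈ dom B`. -/
def SimilarToSelfAdjoint (B : H →ₗ.[ℂ] H) : Prop :=
  ∃ (S : H ≃L[ℂ] H) (A : H →ₗ.[ℂ] H), IsSelfAdjoint A ∧
    (A.domain : Set H) = (fun h => S h) '' (B.domain : Set H) ∧
    ∀ (h : B.domain) (hSh : S (h : H) ∈ A.domain), A ⟨S (h : H), hSh⟩ = S (B h)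

/-- `ψ` solves `ψ' = -B ψ + f` on the set `s` with a continuous derivative:
on `s`, `ψ` takes values in `dom B`, is differentiable with derivative `ψ'`,
`ψ'` is continuous on `s`, and `ψ' x = -B (ψ x) + f x`. -/
def IsStrongSolutionOn (B : H →ₗ.[ℂ] H) (f : ℝ → H) (ψ : ℝ → H) (s : Set ℝ) : Prop :=
  ∃ ψ' : ℝ → H, ContinuousOn ψ' s ∧
    ∀ x ∈ s, HasDerivAt ψ (ψ' x) x ∧
      ∃ hx : ψ x ∈ B.domain, ψ' x = -(B ⟨ψ x, hx⟩) + f x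

/-!
Let `A = S B S⁻¹` be self-adjoint, `D = (1 + A²)⁻¹` and `K = A (1 + A²)⁻¹`. The bounded functional
calculus of `D` provides `exp (-x |A|)`, and `x ↦ exp (-x |A|) k` is a decaying solution of
`ψ' = -A ψ` whenever `k` lies in the range of the positive spectral projection `E` of `A`. Hence
every vector in the range of `P = S⁻¹ E S` is the initial value of a decaying solution of
`ψ' = -B ψ`. Positivity of `L = J B` says that `M = S⁻* J S⁻¹` satisfies `⟪M A a, a⟫ ≥ 0`; as
`2 E - 1` is the sign of `A`, it follows that `M (2 E - 1) ≥ 0`, that is, `J (2 P - 1) ≥ 0`.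
So `1 + J (2 P - 1)` is invertible, and `g + J (2 P - 1) g = 2 φ₊` gives `P₊ P g = φ₊`.

For uniqueness, the indefinite energy `⟪J ψ, ψ⟫` of a decaying solution is nonincreasing with limit
`0`, while it is nonpositive at `0` if `P₊ ψ(0) = 0`.
-/

open Filter Topology

theorem pow_mul_exp_neg_mul_le {a s : ℝ} (ha : 0 < a) (hs : 0 ≤ s) (n : ℕ) :
    s ^ n * Real.exp (-(a * s)) ≤ n.factorial / a ^ n := by
  have h := Real.pow_div_factorial_le_exp (a * s) (by positivity) n
  rw [div_le_iff₀ (by positivity), mul_pow] at h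
  rw [Real.exp_neg, ← div_eq_mul_inv, div_le_div_iff₀ (by positivity) (by positivity)]
  linarith

theorem abs_exp_sub_one_sub_id_le_sq_mul_exp (a : ℝ) :
    |Real.exp a - 1 - a| ≤ a ^ 2 * Real.exp |a| := by
  have h := Complex.norm_exp_sub_sum_le_norm_mul_exp a 2
  simp only [Finset.sum_range_succ, Finset.range_zero, Finset.sum_empty, pow_zero, pow_one,
    Nat.factorial, Complex.norm_real, Real.norm_eq_abs, sq_abs] at h
  norm_num at h
  rw [← sub_sub] at h
  exact_mod_cast h

theorem abs_pow_mul_exp_neg_mul_taylor_le {x y s : ℝ} (hx : 0 < x) (hy : |y - x| ≤ x / 2)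
    (hs : 0 ≤ s) (n : ℕ) :
    |s ^ n * Real.exp (-(y * s)) - s ^ n * Real.exp (-(x * s)) -
      (y - x) * -(s ^ (n + 1) * Real.exp (-(x * s)))| ≤
      (n + 2).factorial / (x / 2) ^ (n + 2) * (y - x) ^ 2 := by
  set a := -((y - x) * s) with ha
  have hfactor : s ^ n * Real.exp (-(y * s)) - s ^ n * Real.exp (-(x * s)) -
      (y - x) * -(s ^ (n + 1) * Real.exp (-(x * s))) =
      s ^ n * Real.exp (-(x * s)) * (Real.exp a - 1 - a) := by
    rw [show -(y * s) = -(x * s) + a by rw [ha]; ring, Real.exp_add, ha]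
    ring
  have ha_le : |a| ≤ x / 2 * s := by
    rw [ha, abs_neg, abs_mul, abs_of_nonneg hs]
    gcongr
  have hexp : Real.exp (-(x * s)) * Real.exp |a| ≤ Real.exp (-(x / 2 * s)) := by
    rw [← Real.exp_add]
    exact Real.exp_le_exp.mpr (by linarith)
  rw [hfactor, abs_mul, abs_of_nonneg (by positivity)]
  calc s ^ n * Real.exp (-(x * s)) * |Real.exp a - 1 - a|
      ≤ s ^ n * Real.exp (-(x * s)) * (a ^ 2 * Real.exp |a|) := by
        gcongr
        exact abs_exp_sub_one_sub_id_le_sq_mul_exp a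
    _ = s ^ n * a ^ 2 * (Real.exp (-(x * s)) * Real.exp |a|) := by ring
    _ ≤ s ^ n * a ^ 2 * Real.exp (-(x / 2 * s)) := by gcongr
    _ = s ^ (n + 2) * Real.exp (-(x / 2 * s)) * (y - x) ^ 2 := by rw [ha]; ring
    _ ≤ (n + 2).factorial / (x / 2) ^ (n + 2) * (y - x) ^ 2 := by
        gcongr
        exact pow_mul_exp_neg_mul_le (half_pos hx) hs (n + 2)

theorem eqOn_const_of_antitoneOn_of_tendsto {f : ℝ → ℝ} {a c : ℝ}
    (hf : AntitoneOn f (Set.Ici a)) (ha : f a ≤ c) (hlim : Tendsto f atTop (𝓝 c)) :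
    Set.EqOn f (fun _ => c) (Set.Ici a) := by
  intro x hx
  refine le_antisymm ((hf Set.self_mem_Ici hx hx).trans ha) (le_of_tendsto hlim ?_)
  filter_upwards [eventually_ge_atTop x] with y hy
  exact hf hx (hx.trans hy) hy

section BoundedOperators

variable {𝕜 E F G : Type*} [RCLike 𝕜]

theorem tendsto_zero_of_denseRange [SeminormedAddCommGroup E] [NormedSpace 𝕜 E]
    [SeminormedAddCommGroup F] [NormedSpace 𝕜 F] {ι : Type*} {l : Filter ι} {T : ι → E →L[𝕜] F}
    {C : ℝ} (hT : ∀ᶠ i in l, ‖T i‖ ≤ C) {q : G → E} (hq : DenseRange q)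
    (hTq : ∀ g, Tendsto (fun i => T i (q g)) l (𝓝 0)) (k : E) :
    Tendsto (fun i => T i k) l (𝓝 0) := by
  rw [Metric.tendsto_nhds]
  intro ε hε
  obtain ⟨g, hg⟩ := Metric.denseRange_iff.mp hq k (ε / (2 * (|C| + 1))) (by positivity)
  rw [dist_eq_norm, lt_div_iff₀ (by positivity)] at hg
  filter_upwards [hT, Metric.tendsto_nhds.mp (hTq g) (ε / 2) (half_pos hε)] with i hi hgi
  rw [dist_zero_right] at hgi ⊢
  have hsplit : T i k = T i (k - q g) + T i (q g) := by rw [map_sub, sub_add_cancel]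
  have hdiff : ‖T i (k - q g)‖ ≤ (|C| + 1) * ‖k - q g‖ :=
    (T i).le_of_opNorm_le (by linarith [le_abs_self C]) _
  rw [hsplit]
  linarith [norm_add_le (T i (k - q g)) (T i (q g))]

variable [NormedAddCommGroup E] [InnerProductSpace 𝕜 E] [CompleteSpace E]

theorem denseRange_of_isSelfAdjoint_of_injective {T : E →L[𝕜] E} (hT : IsSelfAdjoint T)
    (hinj : Function.Injective T) : DenseRange T := by
  have hortho : T.rangeᗮ = ⊥ := by
    rw [ContinuousLinearMap.orthogonal_range, hT.adjoint_eq]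
    exact LinearMap.ker_eq_bot.mpr hinj
  exact (Submodule.dense_iff_topologicalClosure_eq_top (s := T.range)).mpr
    (Submodule.topologicalClosure_eq_top_iff.mpr hortho)

end BoundedOperators

omit [CompleteSpace H] in
theorem hasDerivAt_reApplyInnerSelf {J : H →L[ℂ] H} (hJ : (J : H →ₗ[ℂ] H).IsSymmetric)
    {w : ℝ → H} {w' : H} {x : ℝ} (hw : HasDerivAt w w' x) :
    HasDerivAt (fun y => J.reApplyInnerSelf (w y)) (2 * (⟪J w', w x⟫_ℂ).re) x := by
  have hJw : HasDerivAt (fun y => J (w y)) (J w') x :=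
    (J.restrictScalars ℝ).hasFDerivAt.comp_hasDerivAt x hw
  refine (Complex.reCLM.hasFDerivAt.comp_hasDerivAt x (hJw.inner ℂ hw)).congr_deriv ?_
  have hswap : (⟪J (w x), w'⟫_ℂ).re = (⟪J w', w x⟫_ℂ).re := by
    rw [← Complex.conj_re, inner_conj_symm]
    exact congrArg Complex.re (hJ w' (w x)).symm
  rw [Complex.reCLM_apply, Complex.add_re, hswap, two_mul]

omit [CompleteSpace H] in
theorem clm_nonneg_iff_inner_nonneg {X : H →L[ℂ] H} : 0 ≤ X ↔ ∀ h, 0 ≤ ⟪X h, h⟫_ℂ := by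
  simp only [ContinuousLinearMap.nonneg_iff_isPositive, ContinuousLinearMap.isPositive_iff_complex,
    Complex.nonneg_iff, Complex.ext_iff, RCLike.re_to_complex, Complex.ofReal_re, Complex.ofReal_im,
    true_and, and_comm]

theorem nonneg_of_denseRange_of_star_mul_mul_nonneg {X T : H →L[ℂ] H} (hT : DenseRange T)
    (hX : 0 ≤ star T * X * T) : 0 ≤ X := by
  rw [clm_nonneg_iff_inner_nonneg] at hX ⊢
  refine fun h => hT.induction_on (p := fun h => 0 ≤ ⟪X h, h⟫_ℂ) h ?_ fun g => ?_
  · exact isClosed_Ici.preimage (X.continuous.inner (𝕜 := ℂ) continuous_id)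
  · rw [← ContinuousLinearMap.adjoint_inner_left]
    exact hX g

/-- Continuous functions tending to `0` at `+∞`: the functions that `radialCfc` applies to
`|A|`. -/
structure VanishesAtTop (f : ℝ → ℝ) : Prop where
  continuous : Continuous f
  tendsto : Tendsto f atTop (𝓝 0)

namespace VanishesAtTop

variable {f g : ℝ → ℝ}

theorem add (hf : VanishesAtTop f) (hg : VanishesAtTop g) : VanishesAtTop fun s => f s + g s :=
  ⟨hf.continuous.add hg.continuous, by simpa using hf.tendsto.add hg.tendsto⟩

theorem sub (hf : VanishesAtTop f) (hg : VanishesAtTop g) : VanishesAtTop fun s => f s - g s :=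
  ⟨hf.continuous.sub hg.continuous, by simpa using hf.tendsto.sub hg.tendsto⟩

theorem mul (hf : VanishesAtTop f) (hg : VanishesAtTop g) : VanishesAtTop fun s => f s * g s :=
  ⟨hf.continuous.mul hg.continuous, by simpa using hf.tendsto.mul hg.tendsto⟩

theorem const_mul (c : ℝ) (hf : VanishesAtTop f) : VanishesAtTop fun s => c * f s :=
  ⟨hf.continuous.const_mul c, by simpa using hf.tendsto.const_mul c⟩

end VanishesAtTop

theorem vanishesAtTop_one_add_sq_inv : VanishesAtTop fun s => (1 + s ^ 2)⁻¹ :=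
  ⟨Continuous.inv₀ (by fun_prop) fun s => by positivity,
    tendsto_inv_atTop_zero.comp
      (tendsto_atTop_add_const_left _ 1 (tendsto_pow_atTop two_ne_zero))⟩

theorem vanishesAtTop_mul_one_add_sq_inv : VanishesAtTop fun s => s * (1 + s ^ 2)⁻¹ := by
  refine ⟨continuous_id.mul vanishesAtTop_one_add_sq_inv.continuous,
    squeeze_zero' ?_ ?_ tendsto_inv_atTop_zero⟩
  · filter_upwards [eventually_ge_atTop 0] with s hs
    positivity
  · filter_upwards [eventually_gt_atTop 0] with s hs
    rw [← div_eq_mul_inv, div_le_iff₀ (by positivity), inv_mul_eq_div, le_div_iff₀ hs]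
    nlinarith

theorem vanishesAtTop_pow_mul_exp_neg_mul {x : ℝ} (hx : 0 < x) (n : ℕ) :
    VanishesAtTop fun s => s ^ n * Real.exp (-(x * s)) :=
  ⟨by fun_prop, by simpa using tendsto_rpow_mul_exp_neg_mul_atTop_nhds_zero n x hx⟩

/-- The function `d ↦ f √(d⁻¹ - 1)` on `(0, 1]`, extended by `0` to `d = 0`. It satisfies
`radialLift f (1 + s²)⁻¹ = f s` for `s ≥ 0`. -/
def radialLift (f : ℝ → ℝ) : ℝ → ℝ := Function.update (fun d => f √(d⁻¹ - 1)) 0 0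

@[simp]
theorem radialLift_zero (f : ℝ → ℝ) : radialLift f 0 = 0 := Function.update_self ..

theorem radialLift_of_ne_zero (f : ℝ → ℝ) {d : ℝ} (hd : d ≠ 0) :
    radialLift f d = f √(d⁻¹ - 1) := Function.update_of_ne hd ..

theorem VanishesAtTop.continuousOn_radialLift {f : ℝ → ℝ} (hf : VanishesAtTop f) :
    ContinuousOn (radialLift f) (Set.Icc 0 1) := by
  have hIoc : Set.Icc (0 : ℝ) 1 \ {0} = Set.Ioc 0 1 := Set.Icc_sdiff_left
  refine continuousOn_update_iff.mpr ⟨?_, fun _ => ?_⟩ <;> rw [hIoc]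
  · have hinv : ContinuousOn (fun d : ℝ => d⁻¹) (Set.Ioc 0 1) :=
      continuousOn_inv₀.mono fun d hd => hd.1.ne'
    exact hf.continuous.comp_continuousOn ((hinv.sub continuousOn_const).sqrt)
  · have hinv : Tendsto (fun d : ℝ => d⁻¹ - 1) (𝓝[Set.Ioc 0 1] 0) atTop :=
      tendsto_atTop_add_const_right _ (-1)
        (tendsto_inv_nhdsGT_zero.mono_left (nhdsWithin_mono _ Set.Ioc_subset_Ioi_self))
    exact hf.tendsto.comp (Real.tendsto_sqrt_atTop.comp hinv)

section RadialCalculus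

variable {𝔄 : Type*} [CStarAlgebra 𝔄] {D : 𝔄} {f g : ℝ → ℝ}

/-- The operator `f |A|`, expressed through `D = (1 + A²)⁻¹`. -/
def radialCfc (D : 𝔄) (f : ℝ → ℝ) : 𝔄 := cfc (radialLift f) D

theorem norm_radialCfc_le {c : ℝ} (hf : ∀ s, 0 ≤ s → |f s| ≤ c) : ‖radialCfc D f‖ ≤ c := by
  have hc : 0 ≤ c := (abs_nonneg _).trans (hf 0 le_rfl)
  refine norm_cfc_le hc fun d _ => ?_
  rcases eq_or_ne d 0 with rfl | hd
  · simpa using hc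
  · rw [radialLift_of_ne_zero f hd]
    exact hf _ (Real.sqrt_nonneg _)

theorem radialCfc_nonneg [PartialOrder 𝔄] [StarOrderedRing 𝔄] (hf : ∀ s, 0 ≤ s → 0 ≤ f s) :
    0 ≤ radialCfc D f := by
  refine cfc_nonneg fun d _ => ?_
  rcases eq_or_ne d 0 with rfl | hd
  · simp
  · rw [radialLift_of_ne_zero f hd]
    exact hf _ (Real.sqrt_nonneg _)

theorem radialCfc_sub (hσ : spectrum ℝ D ⊆ Set.Icc 0 1) (hf : VanishesAtTop f)
    (hg : VanishesAtTop g) :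
    radialCfc D (fun s => f s - g s) = radialCfc D f - radialCfc D g := by
  rw [radialCfc, radialCfc, radialCfc, ← cfc_sub _ _ D (hf.continuousOn_radialLift.mono hσ)
    (hg.continuousOn_radialLift.mono hσ)]
  congr 1 with d
  rcases eq_or_ne d 0 with rfl | hd
  · simp
  · simp only [radialLift_of_ne_zero _ hd]

theorem radialCfc_mul (hσ : spectrum ℝ D ⊆ Set.Icc 0 1) (hf : VanishesAtTop f)
    (hg : VanishesAtTop g) :
    radialCfc D (fun s => f s * g s) = radialCfc D f * radialCfc D g := by
  rw [radialCfc, radialCfc, radialCfc, ← cfc_mul _ _ D (hf.continuousOn_radialLift.mono hσ)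
    (hg.continuousOn_radialLift.mono hσ)]
  congr 1 with d
  rcases eq_or_ne d 0 with rfl | hd
  · simp
  · simp only [radialLift_of_ne_zero _ hd]

theorem radialCfc_const_mul (hσ : spectrum ℝ D ⊆ Set.Icc 0 1) (hf : VanishesAtTop f) (c : ℝ) :
    radialCfc D (fun s => c * f s) = c • radialCfc D f := by
  rw [radialCfc, radialCfc, ← cfc_smul c _ D (hf.continuousOn_radialLift.mono hσ)]
  congr 1 with d
  rcases eq_or_ne d 0 with rfl | hd
  · simp
  · simp only [radialLift_of_ne_zero _ hd, smul_eq_mul]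

theorem radialCfc_one_add_sq_inv (hD : IsSelfAdjoint D) (hσ : spectrum ℝ D ⊆ Set.Icc 0 1) :
    radialCfc D (fun s => (1 + s ^ 2)⁻¹) = D := by
  conv_rhs => rw [← cfc_id' ℝ D]
  refine cfc_congr fun d hd => ?_
  rcases eq_or_ne d 0 with rfl | hne
  · simp
  · have hpos : 0 < d := (hσ hd).1.lt_of_ne' hne
    rw [radialLift_of_ne_zero _ hne,
      Real.sq_sqrt (sub_nonneg.mpr ((one_le_inv₀ hpos).mpr (hσ hd).2)), add_sub_cancel, inv_inv]

theorem radialCfc_mul_one_add_sq_inv_mul_self (hD : IsSelfAdjoint D)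
    (hσ : spectrum ℝ D ⊆ Set.Icc 0 1) :
    radialCfc D (fun s => s * (1 + s ^ 2)⁻¹) * radialCfc D (fun s => s * (1 + s ^ 2)⁻¹) =
      D - D * D := by
  have hD' := vanishesAtTop_one_add_sq_inv
  have hsq : radialCfc D (fun s => (1 + s ^ 2)⁻¹ - (1 + s ^ 2)⁻¹ * (1 + s ^ 2)⁻¹) = D - D * D := by
    rw [radialCfc_sub hσ hD' (hD'.mul hD'), radialCfc_mul hσ hD' hD',
      radialCfc_one_add_sq_inv hD hσ]
  rw [← radialCfc_mul hσ vanishesAtTop_mul_one_add_sq_inv vanishesAtTop_mul_one_add_sq_inv, ← hsq]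
  congr 1 with s
  field_simp
  ring

/-- The operator `|A|ⁿ exp (-x |A|)`, expressed through `D = (1 + A²)⁻¹`. -/
def absPowMulExp (D : 𝔄) (n : ℕ) (x : ℝ) : 𝔄 :=
  radialCfc D fun s => s ^ n * Real.exp (-(x * s))

theorem hasDerivAt_absPowMulExp (hσ : spectrum ℝ D ⊆ Set.Icc 0 1) {x : ℝ} (hx : 0 < x) (n : ℕ) :
    HasDerivAt (absPowMulExp D n) (-absPowMulExp D (n + 1) x) x := by
  rw [hasDerivAt_iff_isLittleO]
  have hsq : (fun y : ℝ => (y - x) ^ 2) =o[𝓝 x] fun y => y - x := by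
    have htendsto : Tendsto (fun y => y - x) (𝓝 x) (𝓝 0) := by
      simpa using (continuous_sub_right x).tendsto x
    simpa [Function.comp_def] using
      (Asymptotics.isLittleO_pow_id (𝕜 := ℝ) one_lt_two).comp_tendsto htendsto
  refine Asymptotics.IsBigO.trans_isLittleO
    (.of_bound ((n + 2).factorial / (x / 2) ^ (n + 2)) ?_) hsq
  filter_upwards [Metric.ball_mem_nhds x (half_pos hx)] with y (hy : |y - x| < x / 2)
  have hy₀ : 0 < y := by linarith [(abs_lt.mp hy).1]
  have hfy := vanishesAtTop_pow_mul_exp_neg_mul hy₀ n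
  have hfx := vanishesAtTop_pow_mul_exp_neg_mul hx n
  have hf' := vanishesAtTop_pow_mul_exp_neg_mul hx (n + 1)
  have hremainder : absPowMulExp D n y - absPowMulExp D n x -
      (y - x) • -absPowMulExp D (n + 1) x =
      radialCfc D (fun s => s ^ n * Real.exp (-(y * s)) - s ^ n * Real.exp (-(x * s)) -
        -(y - x) * (s ^ (n + 1) * Real.exp (-(x * s)))) := by
    rw [radialCfc_sub hσ (hfy.sub hfx) (hf'.const_mul _), radialCfc_sub hσ hfy hfx,
      radialCfc_const_mul hσ hf', neg_smul, smul_neg, absPowMulExp, absPowMulExp, absPowMulExp]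
  rw [hremainder, Real.norm_of_nonneg (sq_nonneg (y - x))]
  refine norm_radialCfc_le fun s hs => ?_
  rw [neg_mul_comm]
  exact abs_pow_mul_exp_neg_mul_taylor_le hx hy.le hs n

theorem norm_absPowMulExp_zero_le_one {x : ℝ} (hx : 0 ≤ x) : ‖absPowMulExp D 0 x‖ ≤ 1 := by
  refine norm_radialCfc_le fun s hs => ?_
  rw [pow_zero, one_mul, Real.abs_exp, Real.exp_le_one_iff]
  nlinarith

theorem norm_absPowMulExp_zero_mul_self_sub_self_le (hD : IsSelfAdjoint D)
    (hσ : spectrum ℝ D ⊆ Set.Icc 0 1) {x : ℝ} (hx : 0 < x) : ‖absPowMulExp D 0 x * D - D‖ ≤ x := by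
  have hexp := vanishesAtTop_pow_mul_exp_neg_mul hx 0
  have hinv := vanishesAtTop_one_add_sq_inv
  have hcfc : absPowMulExp D 0 x * D - D = radialCfc D fun s =>
      s ^ 0 * Real.exp (-(x * s)) * (1 + s ^ 2)⁻¹ - (1 + s ^ 2)⁻¹ := by
    rw [radialCfc_sub hσ (hexp.mul hinv) hinv, radialCfc_mul hσ hexp hinv,
      radialCfc_one_add_sq_inv hD hσ, absPowMulExp]
  rw [hcfc]
  refine norm_radialCfc_le fun s hs => ?_
  have hle : Real.exp (-(x * s)) ≤ 1 := Real.exp_le_one_iff.mpr (by nlinarith)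
  have hge := Real.one_sub_le_exp_neg (x * s)
  rw [pow_zero, one_mul, ← sub_one_mul, abs_mul, abs_of_nonpos (by linarith),
    abs_of_pos (by positivity), ← div_eq_mul_inv, div_le_iff₀ (by positivity)]
  nlinarith [mul_nonneg hx.le (sq_nonneg (s - 1)), mul_nonneg hx.le (sq_nonneg s)]

theorem norm_absPowMulExp_zero_mul_radialCfc_le (hσ : spectrum ℝ D ⊆ Set.Icc 0 1) {x : ℝ}
    (hx : 0 < x) : ‖absPowMulExp D 0 x * radialCfc D (fun s => s * (1 + s ^ 2)⁻¹)‖ ≤ x⁻¹ := by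
  rw [absPowMulExp, ← radialCfc_mul hσ (vanishesAtTop_pow_mul_exp_neg_mul hx 0)
    vanishesAtTop_mul_one_add_sq_inv]
  refine norm_radialCfc_le fun s hs => ?_
  rw [abs_of_nonneg (by positivity)]
  have hinv : (1 + s ^ 2)⁻¹ ≤ 1 := inv_le_one_of_one_le₀ (by nlinarith)
  calc s ^ 0 * Real.exp (-(x * s)) * (s * (1 + s ^ 2)⁻¹)
      ≤ s ^ 0 * Real.exp (-(x * s)) * (s * 1) := by gcongr
    _ = s ^ 1 * Real.exp (-(x * s)) := by ring
    _ ≤ (Nat.factorial 1 : ℕ) / x ^ 1 := pow_mul_exp_neg_mul_le hx hs 1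
    _ = x⁻¹ := by simp

end RadialCalculus

theorem mem_graph_iff_inner_of_isSelfAdjoint {𝕜 E : Type*} [RCLike 𝕜] [NormedAddCommGroup E]
    [InnerProductSpace 𝕜 E] [CompleteSpace E] {A : E →ₗ.[𝕜] E} (hA : IsSelfAdjoint A) {u v : E} :
    (u, v) ∈ A.graph ↔ ∀ a b, (a, b) ∈ A.graph → inner 𝕜 b u = inner 𝕜 a v := by
  have hgraph : A.graph = A.graph.adjoint := by
    conv_lhs => rw [← LinearPMap.isSelfAdjoint_def.mp hA]
    exact LinearPMap.adjoint_graph_eq_graph_adjoint hA.dense_domain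
  conv_lhs => rw [hgraph]
  simp only [Submodule.mem_adjoint_iff, sub_eq_zero]

/-- The bounded operators `D = (1 + A²)⁻¹` and `K = A (1 + A²)⁻¹`, the imaginary and real parts of
the resolvent `(A - i)⁻¹`, encoded by the equations `A D = K` and `A K = 1 - D`. -/
structure IsResolventPair (A : H →ₗ.[ℂ] H) (D K : H →L[ℂ] H) : Prop where
  mem_graph_fst : ∀ h, (D h, K h) ∈ A.graph
  mem_graph_snd : ∀ h, (K h, h - D h) ∈ A.graph

/-- `(D h, K h)` is the orthogonal projection of `(h, 0)` onto the graph of `A`. -/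
theorem exists_isResolventPair {A : H →ₗ.[ℂ] H} (hA : IsSelfAdjoint A) :
    ∃ D K : H →L[ℂ] H, IsResolventPair A D K := by
  let e := WithLp.prodContinuousLinearEquiv 2 ℂ H H
  let Γ : Submodule ℂ (WithLp 2 (H × H)) := A.graph.comap (e : WithLp 2 (H × H) →ₗ[ℂ] H × H)
  have hΓ : IsClosed (Γ : Set (WithLp 2 (H × H))) := hA.isClosed.preimage e.continuous
  have : CompleteSpace Γ := hΓ.completeSpace_coe
  let T : H →L[ℂ] H × H := (e : WithLp 2 (H × H) →L[ℂ] H × H) ∘L Γ.starProjection ∘L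
    (e.symm : H × H →L[ℂ] WithLp 2 (H × H)) ∘L ContinuousLinearMap.inl ℂ H H
  refine ⟨ContinuousLinearMap.fst ℂ H H ∘L T, ContinuousLinearMap.snd ℂ H H ∘L T,
    fun h => Γ.starProjection_apply_mem (e.symm (h, 0)), fun h => ?_⟩
  rw [mem_graph_iff_inner_of_isSelfAdjoint hA]
  intro a b hab
  have hortho : ⟪e.symm (a, b), e.symm (h, 0) - Γ.starProjection (e.symm (h, 0))⟫_ℂ = 0 :=
    (Submodule.mem_orthogonal _ _).mp (Γ.sub_starProjection_mem_orthogonal (e.symm (h, 0))) _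
      (by simpa [Γ] using hab)
  rw [WithLp.prod_inner_apply] at hortho
  change ⟪a, h - (T h).1⟫_ℂ + ⟪b, 0 - (T h).2⟫_ℂ = 0 at hortho
  rw [zero_sub, inner_neg_right, ← sub_eq_add_neg, sub_eq_zero] at hortho
  exact hortho.symm

namespace IsResolventPair

variable {A : H →ₗ.[ℂ] H} {D K : H →L[ℂ] H}

theorem eq_of_mem_graph (hDK : IsResolventPair A D K) (hA : IsSelfAdjoint A) {h u v : H}
    (huv : (u, v) ∈ A.graph) (hv : (v, h - u) ∈ A.graph) : D h = u ∧ K h = v := by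
  have hfst : (D h - u, K h - v) ∈ A.graph := A.graph.sub_mem (hDK.mem_graph_fst h) huv
  have hsnd : (K h - v, -(D h - u)) ∈ A.graph := by
    have := A.graph.sub_mem (hDK.mem_graph_snd h) hv
    rwa [Prod.mk_sub_mk, sub_sub_sub_cancel_left, ← neg_sub (D h) u] at this
  have hinner := (mem_graph_iff_inner_of_isSelfAdjoint hA).mp hsnd _ _ hfst
  rw [inner_neg_right, inner_self_eq_norm_sq_to_K, inner_self_eq_norm_sq_to_K] at hinner
  have hnorm : ‖K h - v‖ ^ 2 = -‖D h - u‖ ^ 2 := mod_cast hinner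
  have hD : ‖D h - u‖ = 0 := by nlinarith [sq_nonneg ‖K h - v‖, sq_nonneg ‖D h - u‖]
  have hK : ‖K h - v‖ = 0 := by nlinarith [sq_nonneg ‖K h - v‖, sq_nonneg ‖D h - u‖]
  exact ⟨sub_eq_zero.mp (norm_eq_zero.mp hD), sub_eq_zero.mp (norm_eq_zero.mp hK)⟩

theorem inner_fst (hDK : IsResolventPair A D K) (hA : IsSelfAdjoint A) (h g : H) :
    ⟪D h, g⟫_ℂ = ⟪D h, D g⟫_ℂ + ⟪K h, K g⟫_ℂ := by
  rw [(mem_graph_iff_inner_of_isSelfAdjoint hA).mp (hDK.mem_graph_snd g) _ _ (hDK.mem_graph_fst h),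
    ← inner_add_right, add_sub_cancel]

theorem isSelfAdjoint_fst (hDK : IsResolventPair A D K) (hA : IsSelfAdjoint A) :
    IsSelfAdjoint D := by
  refine ContinuousLinearMap.isSelfAdjoint_iff_isSymmetric.mpr fun h g => ?_
  change ⟪D h, g⟫_ℂ = ⟪h, D g⟫_ℂ
  rw [← inner_conj_symm h (D g), hDK.inner_fst hA h g, hDK.inner_fst hA g h, map_add,
    inner_conj_symm, inner_conj_symm]

theorem isSelfAdjoint_snd (hDK : IsResolventPair A D K) (hA : IsSelfAdjoint A) :
    IsSelfAdjoint K := by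
  refine ContinuousLinearMap.isSelfAdjoint_iff_isSymmetric.mpr fun h g => ?_
  change ⟪K h, g⟫_ℂ = ⟪h, K g⟫_ℂ
  have hinner {h g u v : H} (hhg : (h, g) ∈ A.graph) (huv : (u, v) ∈ A.graph) :=
    (mem_graph_iff_inner_of_isSelfAdjoint hA).mp huv h g hhg
  have hsnd := hinner (hDK.mem_graph_snd h) (hDK.mem_graph_snd g)
  have hfst := hinner (hDK.mem_graph_fst h) (hDK.mem_graph_fst g)
  rw [inner_sub_left, inner_sub_right] at hsnd
  linear_combination hfst - hsnd

theorem nonneg_fst (hDK : IsResolventPair A D K) (hA : IsSelfAdjoint A) : 0 ≤ D := by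
  refine clm_nonneg_iff_inner_nonneg.mpr fun h => ?_
  rw [hDK.inner_fst hA, inner_self_eq_norm_sq_to_K, inner_self_eq_norm_sq_to_K]
  norm_cast
  exact Complex.zero_le_real.mpr (by positivity)

theorem norm_fst_le_one (hDK : IsResolventPair A D K) (hA : IsSelfAdjoint A) : ‖D‖ ≤ 1 := by
  refine D.opNorm_le_bound zero_le_one fun h => ?_
  have hinner := congrArg Complex.re (hDK.inner_fst hA h h)
  have hcs : (⟪D h, h⟫_ℂ).re ≤ ‖D h‖ * ‖h‖ := re_inner_le_norm (𝕜 := ℂ) _ _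
  have hD : (⟪D h, D h⟫_ℂ).re = ‖D h‖ ^ 2 := inner_self_eq_norm_sq (𝕜 := ℂ) _
  have hK : 0 ≤ (⟪K h, K h⟫_ℂ).re := inner_self_nonneg (𝕜 := ℂ)
  rw [Complex.add_re] at hinner
  by_contra! hlt
  nlinarith [norm_nonneg h, norm_nonneg (D h)]

theorem spectrum_fst_subset (hDK : IsResolventPair A D K) (hA : IsSelfAdjoint A) :
    spectrum ℝ D ⊆ Set.Icc 0 1 := by
  refine fun d hd => ⟨spectrum_nonneg_of_nonneg (hDK.nonneg_fst hA) hd, ?_⟩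
  calc d ≤ ‖d‖ := le_abs_self d
    _ ≤ ‖D‖ * ‖(1 : H →L[ℂ] H)‖ := spectrum.norm_le_norm_mul_of_mem hd
    _ ≤ 1 := mul_le_one₀ (hDK.norm_fst_le_one hA) (norm_nonneg _) ContinuousLinearMap.norm_id_le

theorem snd_apply_fst_and_snd (hDK : IsResolventPair A D K) (hA : IsSelfAdjoint A) (h : H) :
    D (K h) = K (D h) ∧ K (K h) = D h - D (D h) :=
  hDK.eq_of_mem_graph hA (hDK.mem_graph_snd (D h))
    (A.graph.sub_mem (hDK.mem_graph_fst h) (hDK.mem_graph_fst (D h)))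

theorem commute (hDK : IsResolventPair A D K) (hA : IsSelfAdjoint A) : Commute D K :=
  ContinuousLinearMap.ext fun h => (hDK.snd_apply_fst_and_snd hA h).1

theorem snd_mul_self (hDK : IsResolventPair A D K) (hA : IsSelfAdjoint A) :
    K * K = D - D * D :=
  ContinuousLinearMap.ext fun h => (hDK.snd_apply_fst_and_snd hA h).2

theorem radialCfc_eq_abs (hDK : IsResolventPair A D K) (hA : IsSelfAdjoint A) :
    radialCfc D (fun s => s * (1 + s ^ 2)⁻¹) = CFC.abs K := by
  refine (CFC.sqrt_unique ?_ (radialCfc_nonneg fun s hs => by positivity)).symm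
  rw [(hDK.isSelfAdjoint_snd hA).star_eq, hDK.snd_mul_self hA]
  exact radialCfc_mul_one_add_sq_inv_mul_self (hDK.isSelfAdjoint_fst hA)
    (hDK.spectrum_fst_subset hA)

omit [CompleteSpace H] in
theorem fst_injective (hDK : IsResolventPair A D K) : Function.Injective D := by
  refine (injective_iff_map_eq_zero D).mpr fun h hD => ?_
  have hK : K h = 0 := A.graph_fst_eq_zero_snd (hDK.mem_graph_fst h) hD
  simpa [hD] using A.graph_fst_eq_zero_snd (hDK.mem_graph_snd h) hK

omit [CompleteSpace H] in
theorem snd_injective (hDK : IsResolventPair A D K)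
    (hker : ∀ a, (a, (0 : H)) ∈ A.graph → a = 0) : Function.Injective K := by
  refine (injective_iff_map_eq_zero K).mpr fun h hK => ?_
  have hD : D h = 0 := hker _ (hK ▸ hDK.mem_graph_fst h)
  exact hDK.fst_injective (hD.trans (map_zero D).symm)

theorem denseRange_abs_snd (hDK : IsResolventPair A D K) (hA : IsSelfAdjoint A)
    (hker : ∀ a, (a, (0 : H)) ∈ A.graph → a = 0) : DenseRange (CFC.abs K : H →L[ℂ] H) := by
  set R : H →L[ℂ] H := CFC.abs K with hR
  have hsq : R * R = K * K := by
    rw [hR, CFC.abs_mul_abs, (hDK.isSelfAdjoint_snd hA).star_eq]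
  have hK := hDK.snd_injective hker
  have hRR : Function.Injective (R ∘ R) := by
    rw [← ContinuousLinearMap.coe_comp, ← ContinuousLinearMap.mul_def, hsq]
    exact hK.comp hK
  exact denseRange_of_isSelfAdjoint_of_injective (CFC.abs_nonneg K).isSelfAdjoint hRR.of_comp

theorem tendsto_absPowMulExp_zero_nhdsGT (hDK : IsResolventPair A D K) (hA : IsSelfAdjoint A)
    (k : H) : Tendsto (fun x => absPowMulExp D 0 x k) (𝓝[>] 0) (𝓝 k) := by
  have hsub : Tendsto (fun x => (absPowMulExp D 0 x - 1) k) (𝓝[>] 0) (𝓝 0) := by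
    refine tendsto_zero_of_denseRange (C := 1 + 1) ?_ (denseRange_of_isSelfAdjoint_of_injective
      (hDK.isSelfAdjoint_fst hA) hDK.fst_injective) (fun g => ?_) k
    · filter_upwards [self_mem_nhdsWithin] with x hx
      exact (norm_sub_le _ _).trans (add_le_add (norm_absPowMulExp_zero_le_one (le_of_lt hx))
        ContinuousLinearMap.norm_id_le)
    · have hlim : Tendsto (fun x : ℝ => x * ‖g‖) (𝓝[>] 0) (𝓝 0) :=
        tendsto_nhdsWithin_of_tendsto_nhds
          (by simpa using (tendsto_id (x := 𝓝 (0 : ℝ))).mul_const ‖g‖)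
      refine squeeze_zero_norm' ?_ hlim
      filter_upwards [self_mem_nhdsWithin] with x (hx : 0 < x)
      exact (absPowMulExp D 0 x * D - D).le_of_opNorm_le
        (norm_absPowMulExp_zero_mul_self_sub_self_le (hDK.isSelfAdjoint_fst hA)
          (hDK.spectrum_fst_subset hA) hx) g
  simpa using hsub.add_const k

theorem tendsto_absPowMulExp_zero_atTop (hDK : IsResolventPair A D K) (hA : IsSelfAdjoint A)
    (hker : ∀ a, (a, (0 : H)) ∈ A.graph → a = 0) (k : H) :
    Tendsto (fun x => absPowMulExp D 0 x k) atTop (𝓝 0) := by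
  refine tendsto_zero_of_denseRange (C := 1) ?_ (hDK.denseRange_abs_snd hA hker) (fun g => ?_) k
  · filter_upwards [eventually_ge_atTop 0] with x hx
    exact norm_absPowMulExp_zero_le_one hx
  · have hlim : Tendsto (fun x : ℝ => x⁻¹ * ‖g‖) atTop (𝓝 0) := by
      simpa using tendsto_inv_atTop_zero.mul_const ‖g‖
    refine squeeze_zero_norm' ?_ hlim
    filter_upwards [eventually_gt_atTop 0] with x hx
    rw [← hDK.radialCfc_eq_abs hA]
    exact ContinuousLinearMap.le_of_opNorm_le _
      (norm_absPowMulExp_zero_mul_radialCfc_le (hDK.spectrum_fst_subset hA) hx) g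

/-- The pair is `(D V k, K V k)` for `V = (1 + A²) exp (-x |A|)`. -/
theorem absPowMulExp_mem_graph (hDK : IsResolventPair A D K) (hA : IsSelfAdjoint A) {k : H}
    (hk : K k = CFC.abs K k) {x : ℝ} (hx : 0 < x) :
    (absPowMulExp D 0 x k, absPowMulExp D 1 x k) ∈ A.graph := by
  have hσ := hDK.spectrum_fst_subset hA
  have hvanish := (vanishesAtTop_pow_mul_exp_neg_mul hx 0).add
    (vanishesAtTop_pow_mul_exp_neg_mul hx 2)
  set V := radialCfc D fun s => s ^ 0 * Real.exp (-(x * s)) + s ^ 2 * Real.exp (-(x * s))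
  have hDV : D * V = absPowMulExp D 0 x := by
    conv_lhs => enter [1]; rw [← radialCfc_one_add_sq_inv (hDK.isSelfAdjoint_fst hA) hσ]
    rw [← radialCfc_mul hσ vanishesAtTop_one_add_sq_inv hvanish, absPowMulExp]
    congr 1 with s
    field_simp
  have hVabs : V * CFC.abs K = absPowMulExp D 1 x := by
    rw [← hDK.radialCfc_eq_abs hA, ← radialCfc_mul hσ hvanish vanishesAtTop_mul_one_add_sq_inv,
      absPowMulExp]
    congr 1 with s
    field_simp
  have hVK : Commute V K := (hDK.commute hA).cfc_real _
  have hKV : K (V k) = absPowMulExp D 1 x k := by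
    rw [← hVabs, ← mul_apply_eq_comp, ← hVK.eq, mul_apply_eq_comp, hk, mul_apply_eq_comp]
  rw [← hKV, ← hDV]
  exact hDK.mem_graph_fst (V k)

end IsResolventPair

/-- The complement of the projection onto the kernel of `K⁺` serves as the spectral projection of
`K` to `(0, ∞)`. -/
theorem exists_positive_spectral_projection {K : H →L[ℂ] H} (hK : IsSelfAdjoint K) :
    ∃ E : H →L[ℂ] H, K * E = CFC.abs K * E ∧ (2 * E - 1) * CFC.abs K = K := by
  have hsub : K⁺ - K⁻ = K := CFC.posPart_sub_negPart K hK
  have hadd : K⁺ + K⁻ = CFC.abs K := CFC.posPart_add_negPart K hK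
  have hP : IsSelfAdjoint K⁺ := (CFC.posPart_nonneg K).isSelfAdjoint
  have hN : IsSelfAdjoint K⁻ := (CFC.negPart_nonneg K).isSelfAdjoint
  have : CompleteSpace (K⁺).ker := (K⁺).isClosed_ker.completeSpace_coe
  set F : H →L[ℂ] H := (K⁺).ker.starProjection
  have hF : IsSelfAdjoint F := isSelfAdjoint_starProjection _
  have hPF : K⁺ * F = 0 := ContinuousLinearMap.ext fun h =>
    LinearMap.mem_ker.mp ((K⁺).ker.starProjection_apply_mem h)
  have hFN : F * K⁻ = K⁻ := ContinuousLinearMap.ext fun h =>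
    Submodule.starProjection_eq_self_iff.mpr (LinearMap.mem_ker.mpr
      (congrArg (fun T : H →L[ℂ] H => T h) (CFC.posPart_mul_negPart K)))
  have hFP : F * K⁺ = 0 := by
    simpa only [star_mul, hP.star_eq, hF.star_eq, star_zero] using congrArg star hPF
  have hNF : K⁻ * F = K⁻ := by
    simpa only [star_mul, hN.star_eq, hF.star_eq] using congrArg star hFN
  refine ⟨1 - F, ?_, ?_⟩
  · rw [← hadd, ← sub_eq_zero]
    nth_rw 1 [← hsub]
    calc (K⁺ - K⁻) * (1 - F) - (K⁺ + K⁻) * (1 - F) = 2 * (K⁻ * F - K⁻) := by noncomm_ring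
      _ = 0 := by rw [hNF, sub_self, mul_zero]
  · rw [← hadd]
    nth_rw 3 [← hsub]
    calc (2 * (1 - F) - 1) * (K⁺ + K⁻) = K⁺ + K⁻ - 2 * (F * K⁺) - 2 * (F * K⁻) := by noncomm_ring
      _ = K⁺ - K⁻ := by rw [hFP, hFN, mul_zero]; noncomm_ring

/-- The sandwich `|K| (M Z) |K| = |K| M K` reduces the claim to a product of commuting nonnegative
operators. -/
theorem nonneg_mul_of_mul_abs_eq {K M Z : H →L[ℂ] H} (hK : IsSelfAdjoint K)
    (hKd : DenseRange (CFC.abs K : H →L[ℂ] H)) (hZ : Z * CFC.abs K = K) (hM : IsSelfAdjoint M)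
    (hMK : 0 ≤ M * K) : 0 ≤ M * Z := by
  have hcomm : Commute K M := ((hM.commute_iff hK).mpr hMK.isSelfAdjoint).symm
  have hstar : star (CFC.abs K : H →L[ℂ] H) = CFC.abs K := (CFC.abs_nonneg K).isSelfAdjoint.star_eq
  refine nonneg_of_denseRange_of_star_mul_mul_nonneg hKd ?_
  rw [hstar, mul_assoc, mul_assoc, hZ]
  exact Commute.mul_nonneg (CFC.abs_nonneg K) hMK
    ((hcomm.cfcAbs_left (by rwa [hM.star_eq])).mul_right (CFC.commute_abs_self K))

omit [CompleteSpace H] in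
theorem IsResolventPair.nonneg_mul_snd {A : H →ₗ.[ℂ] H} {D K M : H →L[ℂ] H}
    (hDK : IsResolventPair A D K) (hM : (M : H →ₗ[ℂ] H).IsSymmetric)
    (hpos : ∀ a b, (a, b) ∈ A.graph → 0 ≤ ⟪M b, a⟫_ℂ) : 0 ≤ M * K := by
  refine clm_nonneg_iff_inner_nonneg.mpr fun h => ?_
  have hfst : 0 ≤ ⟪M (K h), D h⟫_ℂ := hpos _ _ (hDK.mem_graph_fst h)
  have hsnd : 0 ≤ ⟪M (K h), h - D h⟫_ℂ := by
    have hconj := star_nonneg_iff.mpr (hpos _ _ (hDK.mem_graph_snd h))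
    rw [← starRingEnd_apply, inner_conj_symm] at hconj
    exact hconj.trans_eq (hM (K h) (h - D h)).symm
  calc 0 ≤ ⟪M (K h), D h⟫_ℂ + ⟪M (K h), h - D h⟫_ℂ := add_nonneg hfst hsnd
    _ = ⟪(M * K) h, h⟫_ℂ := by rw [← inner_add_right, add_sub_cancel, mul_apply_eq_comp]

/-- `T` maps the graph of `A` into the graph of `B`, i.e. `T A ⊆ B T`. -/
def Intertwines (T : H →L[ℂ] H) (A B : H →ₗ.[ℂ] H) : Prop :=
  ∀ ⦃a b⦄, (a, b) ∈ A.graph → (T a, T b) ∈ B.graph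

theorem SimilarToSelfAdjoint.exists_intertwines {B : H →ₗ.[ℂ] H}
    (hB : SimilarToSelfAdjoint B) : ∃ (S : H ≃L[ℂ] H) (A : H →ₗ.[ℂ] H), IsSelfAdjoint A ∧
      Intertwines (S.symm : H →L[ℂ] H) A B := by
  obtain ⟨S, A, hA, hdom, hAS⟩ := hB
  refine ⟨S, A, hA, fun a b hab => ?_⟩
  obtain ⟨⟨a, ha⟩, rfl, rfl⟩ := (LinearPMap.mem_graph_iff _).mp hab
  obtain ⟨u, hu, rfl⟩ : a ∈ (fun h => S h) '' (B.domain : Set H) := hdom ▸ ha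
  refine (LinearPMap.mem_graph_iff _).mpr ⟨⟨u, hu⟩, (S.symm_apply_apply u).symm, ?_⟩
  exact (S.symm_apply_eq.mpr (hAS ⟨u, hu⟩ ha)).symm

omit [CompleteSpace H] in
theorem isStrongSolutionOn_zero_iff {B : H →ₗ.[ℂ] H} {ψ : ℝ → H} {s : Set ℝ} :
    IsStrongSolutionOn B (fun _ => 0) ψ s ↔
      ∃ v : ℝ → H, ContinuousOn v s ∧ ∀ x ∈ s, HasDerivAt ψ (-v x) x ∧ (ψ x, v x) ∈ B.graph := by
  simp only [IsStrongSolutionOn, add_zero]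
  constructor
  · rintro ⟨ψ', hψ', h⟩
    refine ⟨fun x => -ψ' x, hψ'.neg, fun x hx => ?_⟩
    obtain ⟨hderiv, hmem, heq⟩ := h x hx
    simp only [heq, neg_neg]
    exact ⟨heq ▸ hderiv, B.mem_graph ⟨ψ x, hmem⟩⟩
  · rintro ⟨v, hv, h⟩
    refine ⟨fun x => -v x, hv.neg, fun x hx => ⟨(h x hx).1, ?_⟩⟩
    obtain ⟨⟨y, hy⟩, rfl, hBy⟩ := (LinearPMap.mem_graph_iff _).mp (h x hx).2
    exact ⟨hy, congrArg Neg.neg hBy.symm⟩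

/-- `ψ` solves `ψ' = -B ψ` on `(0, ∞)`, is continuous up to `0`, and tends to `0` at infinity. -/
structure IsDecayingSolution (B : H →ₗ.[ℂ] H) (ψ : ℝ → H) : Prop where
  continuousOn : ContinuousOn ψ (Set.Ici 0)
  isStrongSolutionOn : IsStrongSolutionOn B (fun _ => 0) ψ (Set.Ioi 0)
  tendsto : Tendsto ψ atTop (𝓝 0)

omit [CompleteSpace H] in
theorem IsDecayingSolution.sub {B : H →ₗ.[ℂ] H} {ψ₁ ψ₂ : ℝ → H} (h₁ : IsDecayingSolution B ψ₁)
    (h₂ : IsDecayingSolution B ψ₂) : IsDecayingSolution B (ψ₁ - ψ₂) := by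
  obtain ⟨v₁, hv₁, hsol₁⟩ := isStrongSolutionOn_zero_iff.mp h₁.isStrongSolutionOn
  obtain ⟨v₂, hv₂, hsol₂⟩ := isStrongSolutionOn_zero_iff.mp h₂.isStrongSolutionOn
  refine ⟨h₁.continuousOn.sub h₂.continuousOn, isStrongSolutionOn_zero_iff.mpr
    ⟨v₁ - v₂, hv₁.sub hv₂, fun x hx => ⟨?_, B.graph.sub_mem (hsol₁ x hx).2 (hsol₂ x hx).2⟩⟩,
    sub_zero (0 : H) ▸ h₁.tendsto.sub h₂.tendsto⟩
  exact ((hsol₁ x hx).1.sub (hsol₂ x hx).1).congr_deriv (neg_sub' _ _).symm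

omit [CompleteSpace H] in
theorem IsDecayingSolution.map {A B : H →ₗ.[ℂ] H} {T : H →L[ℂ] H} {ψ : ℝ → H}
    (hψ : IsDecayingSolution A ψ) (hT : Intertwines T A B) : IsDecayingSolution B (T ∘ ψ) := by
  obtain ⟨v, hv, hsol⟩ := isStrongSolutionOn_zero_iff.mp hψ.isStrongSolutionOn
  refine ⟨T.continuous.comp_continuousOn hψ.continuousOn, isStrongSolutionOn_zero_iff.mpr
    ⟨T ∘ v, T.continuous.comp_continuousOn hv, fun x hx => ⟨?_, hT (hsol x hx).2⟩⟩, ?_⟩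
  · exact ((T.restrictScalars ℝ).hasFDerivAt.comp_hasDerivAt x (hsol x hx).1).congr_deriv
      (map_neg T (v x))
  · simpa using (T.continuous.tendsto 0).comp hψ.tendsto

theorem IsResolventPair.exists_isDecayingSolution {A : H →ₗ.[ℂ] H} {D K : H →L[ℂ] H}
    (hDK : IsResolventPair A D K) (hA : IsSelfAdjoint A)
    (hker : ∀ a, (a, (0 : H)) ∈ A.graph → a = 0) {k : H} (hk : K k = CFC.abs K k) :
    ∃ ψ, IsDecayingSolution A ψ ∧ ψ 0 = k := by
  have hderiv (n : ℕ) {x : ℝ} (hx : 0 < x) :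
      HasDerivAt (fun y => absPowMulExp D n y k) (-absPowMulExp D (n + 1) x k) x :=
    ((ContinuousLinearMap.apply ℂ H k).restrictScalars ℝ).hasFDerivAt.comp_hasDerivAt x
      (hasDerivAt_absPowMulExp (hDK.spectrum_fst_subset hA) hx n)
  refine ⟨Function.update (fun x => absPowMulExp D 0 x k) 0 k, ⟨?_, ?_, ?_⟩,
    Function.update_self ..⟩
  · rw [continuousOn_update_iff, Set.Ici_sdiff_left]
    exact ⟨fun x hx => (hderiv 0 hx).continuousAt.continuousWithinAt,
      fun _ => hDK.tendsto_absPowMulExp_zero_nhdsGT hA k⟩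
  · refine isStrongSolutionOn_zero_iff.mpr ⟨fun x => absPowMulExp D 1 x k,
      fun x hx => (hderiv 1 hx).continuousAt.continuousWithinAt, fun x hx => ⟨?_, ?_⟩⟩
    · refine (hderiv 0 hx).congr_of_eventuallyEq ?_
      filter_upwards [eventually_ne_nhds (ne_of_gt hx)] with y hy
      exact Function.update_of_ne hy ..
    · rw [Function.update_of_ne (ne_of_gt hx)]
      exact hDK.absPowMulExp_mem_graph hA hk hx
  · refine (hDK.tendsto_absPowMulExp_zero_atTop hA hker k).congr' ?_
    filter_upwards [eventually_ne_atTop 0] with y hy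
    rw [Function.update_of_ne hy]

theorem exists_decaying_projection_of_isSelfAdjoint {A : H →ₗ.[ℂ] H} (hA : IsSelfAdjoint A)
    (hker : ∀ a, (a, (0 : H)) ∈ A.graph → a = 0) {M : H →L[ℂ] H} (hM : IsSelfAdjoint M)
    (hpos : ∀ a b, (a, b) ∈ A.graph → 0 ≤ ⟪M b, a⟫_ℂ) :
    ∃ E : H →L[ℂ] H, (∀ h, ∃ ψ, IsDecayingSolution A ψ ∧ ψ 0 = E h) ∧ 0 ≤ M * (2 * E - 1) := by
  obtain ⟨D, K, hDK⟩ := exists_isResolventPair hA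
  have hK := hDK.isSelfAdjoint_snd hA
  obtain ⟨E, hKE, hsign⟩ := exists_positive_spectral_projection hK
  refine ⟨E, fun h => hDK.exists_isDecayingSolution hA hker ?_,
    nonneg_mul_of_mul_abs_eq hK (hDK.denseRange_abs_snd hA hker) hsign hM
      (hDK.nonneg_mul_snd (ContinuousLinearMap.isSelfAdjoint_iff_isSymmetric.mp hM) hpos)⟩
  exact congrArg (fun T : H →L[ℂ] H => T h) hKE

theorem mem_graph_pmapComp_iff {J : H →L[ℂ] H} (hJ : IsSignatureOperator J) {L : H →ₗ.[ℂ] H}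
    {u v : H} : (u, v) ∈ (pmapComp J L).graph ↔ (u, J v) ∈ L.graph := by
  have hJJ (w : H) : J (J w) = w := congrArg (fun T : H →L[ℂ] H => T w) hJ.2
  simp only [LinearPMap.mem_graph_iff]
  constructor
  · rintro ⟨y, hy, rfl⟩
    exact ⟨y, hy, (hJJ (L y)).symm⟩
  · rintro ⟨y, hy, hv⟩
    exact ⟨y, hy, (congrArg J hv).trans (hJJ v)⟩

omit [CompleteSpace H] in
theorem IsPositivePMap.inner_nonneg {L : H →ₗ.[ℂ] H} (hL : IsPositivePMap L) {u v : H}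
    (huv : (u, v) ∈ L.graph) : 0 ≤ ⟪v, u⟫_ℂ := by
  obtain ⟨y, rfl, rfl⟩ := (LinearPMap.mem_graph_iff _).mp huv
  by_cases hy : (y : H) = 0
  · simp only [hy, inner_zero_right, le_refl]
  · exact (hL y hy).le

omit [CompleteSpace H] in
theorem IsPositivePMap.eq_zero_of_re_inner_eq_zero {L : H →ₗ.[ℂ] H} (hL : IsPositivePMap L)
    {u v : H} (huv : (u, v) ∈ L.graph) (h : (⟪v, u⟫_ℂ).re = 0) : u = 0 := by
  obtain ⟨y, rfl, rfl⟩ := (LinearPMap.mem_graph_iff _).mp huv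
  by_contra hy
  exact (Complex.pos_iff.mp (hL y hy)).1.ne' h

theorem IsDecayingSolution.eqOn_zero {J : H →L[ℂ] H} (hJ : IsSignatureOperator J)
    {L : H →ₗ.[ℂ] H} (hL : IsPositivePMap L) {ψ : ℝ → H}
    (hψ : IsDecayingSolution (pmapComp J L) ψ) (h0 : J.reApplyInnerSelf (ψ 0) ≤ 0) :
    Set.EqOn ψ 0 (Set.Ici 0) := by
  obtain ⟨v, -, hsol⟩ := isStrongSolutionOn_zero_iff.mp hψ.isStrongSolutionOn
  have hgraph {x : ℝ} (hx : 0 < x) : (ψ x, J (v x)) ∈ L.graph :=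
    (mem_graph_pmapComp_iff hJ).mp (hsol x hx).2
  have henergy {x : ℝ} (hx : 0 < x) : HasDerivAt (fun y => J.reApplyInnerSelf (ψ y))
      (-(2 * (⟪J (v x), ψ x⟫_ℂ).re)) x := by
    refine (hasDerivAt_reApplyInnerSelf (ContinuousLinearMap.isSelfAdjoint_iff_isSymmetric.mp hJ.1)
      (hsol x hx).1).congr_deriv ?_
    rw [map_neg, inner_neg_left, Complex.neg_re, mul_neg]
  have hanti : AntitoneOn (fun y => J.reApplyInnerSelf (ψ y)) (Set.Ici 0) := by
    refine antitoneOn_of_hasDerivWithinAt_nonpos (convex_Ici 0)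
      (J.reApplyInnerSelf_continuous.comp_continuousOn hψ.continuousOn)
      (fun x hx => (henergy (interior_Ici.subset hx)).hasDerivWithinAt) fun x hx => ?_
    have := (Complex.nonneg_iff.mp (hL.inner_nonneg (hgraph (interior_Ici.subset hx)))).1
    linarith
  have hlim : Tendsto (fun y => J.reApplyInnerSelf (ψ y)) atTop (𝓝 0) := by
    simpa [Function.comp_def, ContinuousLinearMap.reApplyInnerSelf_apply] using
      (J.reApplyInnerSelf_continuous.tendsto 0).comp hψ.tendsto
  have hconst := eqOn_const_of_antitoneOn_of_tendsto hanti h0 hlim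
  have hIoi : Set.EqOn ψ 0 (Set.Ioi 0) := by
    intro x (hx : 0 < x)
    have hzero : HasDerivAt (fun y => J.reApplyInnerSelf (ψ y)) 0 x :=
      (hasDerivAt_const x 0).congr_of_eventuallyEq
        (hconst.eventuallyEq_of_mem (Ici_mem_nhds hx))
    exact hL.eq_zero_of_re_inner_eq_zero (hgraph hx) (by linarith [(henergy hx).unique hzero])
  exact hIoi.of_subset_closure hψ.continuousOn continuousOn_const Set.Ioi_subset_Ici_self
    (closure_Ioi (0 : ℝ)).superset

omit [CompleteSpace H] in
theorem Pplus_apply (J : H →L[ℂ] H) (v : H) : Pplus J v = (2⁻¹ : ℂ) • (v + J v) := rfl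

omit [CompleteSpace H] in
theorem reApplyInnerSelf_nonpos_of_Pplus_eq_zero {J : H →L[ℂ] H} {v : H} (hv : Pplus J v = 0) :
    J.reApplyInnerSelf v ≤ 0 := by
  rw [Pplus_apply, smul_eq_zero_iff_right (by norm_num)] at hv
  rw [ContinuousLinearMap.reApplyInnerSelf_apply, eq_neg_of_add_eq_zero_right hv, inner_neg_left,
    map_neg, neg_nonpos]
  exact inner_self_nonneg

theorem exists_decaying_projection_of_similarToSelfAdjoint {J : H →L[ℂ] H}
    (hJ : IsSignatureOperator J) {L : H →ₗ.[ℂ] H} (hL : IsPositivePMap L)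
    (hsim : SimilarToSelfAdjoint (pmapComp J L)) :
    ∃ P : H →L[ℂ] H, (∀ h, ∃ ψ, IsDecayingSolution (pmapComp J L) ψ ∧ ψ 0 = P h) ∧
      0 ≤ J * (2 * P - 1) := by
  obtain ⟨S, A, hA, hSA⟩ := hsim.exists_intertwines
  have hgraph {a b : H} (hab : (a, b) ∈ A.graph) : (S.symm a, J (S.symm b)) ∈ L.graph :=
    (mem_graph_pmapComp_iff hJ).mp (hSA hab)
  set T : H →L[ℂ] H := (S.symm : H →L[ℂ] H)
  have hTS : T * (S : H →L[ℂ] H) = 1 := S.coe_symm_comp_coe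
  have hker (a : H) (ha : (a, (0 : H)) ∈ A.graph) : a = 0 := by
    have := hL.eq_zero_of_re_inner_eq_zero (hgraph ha) (by simp)
    simpa using this
  have hpos (a b : H) (hab : (a, b) ∈ A.graph) : 0 ≤ ⟪(star T * J * T) b, a⟫_ℂ :=
    (hL.inner_nonneg (hgraph hab)).trans_eq (T.adjoint_inner_left a (J (T b))).symm
  obtain ⟨E, hE, hsign⟩ :=
    exists_decaying_projection_of_isSelfAdjoint hA hker (hJ.1.conjugate' T) hpos
  refine ⟨T * E * (S : H →L[ℂ] H), fun h => ?_, ?_⟩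
  · obtain ⟨ψ, hψ, hψ0⟩ := hE (S h)
    exact ⟨T ∘ ψ, hψ.map hSA, congrArg T hψ0⟩
  · have hST : star (S : H →L[ℂ] H) * star T = 1 := by rw [← star_mul, hTS, star_one]
    calc 0 ≤ star (S : H →L[ℂ] H) * (star T * J * T * (2 * E - 1)) * S :=
          star_left_conjugate_nonneg hsign _
      _ = (star (S : H →L[ℂ] H) * star T) * J * (2 * (T * E * S) - T * S) := by noncomm_ring
      _ = J * (2 * (T * E * S) - 1) := by rw [hST, hTS, one_mul]

/-- Solve `g + J (2 P - 1) g = 2 φ`, which is possible since `1 + J (2 P - 1) ≥ 1`, and add to the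
equation its image under `J`. -/
theorem exists_Pplus_apply_eq {J P : H →L[ℂ] H} (hJ : IsSignatureOperator J)
    (hP : 0 ≤ J * (2 * P - 1)) {φ : H} (hφ : J φ = φ) : ∃ g, Pplus J (P g) = φ := by
  have hJJ (w : H) : J (J w) = w := congrArg (fun T : H →L[ℂ] H => T w) hJ.2
  have hunit : IsUnit (1 + J * (2 * P - 1)) :=
    CStarAlgebra.isUnit_of_le 1 (le_add_of_nonneg_right hP)
  obtain ⟨U, hU⟩ := hunit.exists_right_inv
  set g := U ((2 : ℂ) • φ)
  have hg : g + J ((2 : ℂ) • P g - g) = (2 : ℂ) • φ := by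
    rw [two_mul] at hU
    rw [two_smul]
    exact congrArg (fun W : H →L[ℂ] H => W ((2 : ℂ) • φ)) hU
  have hJg := congrArg J hg
  simp only [map_sub, map_add, map_smul, hJJ, hφ] at hg hJg
  have hsum : (2 : ℂ) • (P g + J (P g)) = (2 : ℂ) • (2 : ℂ) • φ := by
    linear_combination (norm := module) hg + hJg
  refine ⟨g, ?_⟩
  rw [Pplus_apply, smul_right_injective H (two_ne_zero (α := ℂ)) hsum, inv_smul_smul₀ two_ne_zero]

/-- Half-space problem with decay at infinity: if `L = L* > 0` is densely
defined and `B = JL` is similar to a self-adjoint operator, then for every `φ₊ ∈ H₊` there is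
a unique solution of `dψ/dx = -Bψ` on `(0,∞)` with `P₊ψ(0) = φ₊` and `‖ψ(x)‖ → 0`
as `x → +∞`. -/
theorem statement2 (J : H →L[ℂ] H) (hJ : IsSignatureOperator J)
    (L : H →ₗ.[ℂ] H) (hdense : Dense (L.domain : Set H))
    (hLsa : IsSelfAdjoint L) (hLpos : IsPositivePMap L)
    (hsim : SimilarToSelfAdjoint (pmapComp J L))
    (φp : H) (hφp : J φp = φp) :
    (∃ ψ : ℝ → H,
        ContinuousOn ψ (Set.Ici 0) ∧
        IsStrongSolutionOn (pmapComp J L) (fun _ => 0) ψ (Set.Ioi 0) ∧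
        Pplus J (ψ 0) = φp ∧
        Filter.Tendsto (fun x => ‖ψ x‖) Filter.atTop (nhds 0)) ∧
    (∀ ψ₁ ψ₂ : ℝ → H,
        (ContinuousOn ψ₁ (Set.Ici 0) ∧
          IsStrongSolutionOn (pmapComp J L) (fun _ => 0) ψ₁ (Set.Ioi 0) ∧
          Pplus J (ψ₁ 0) = φp ∧
          Filter.Tendsto (fun x => ‖ψ₁ x‖) Filter.atTop (nhds 0)) →
        (ContinuousOn ψ₂ (Set.Ici 0) ∧
          IsStrongSolutionOn (pmapComp J L) (fun _ => 0) ψ₂ (Set.Ioi 0) ∧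
          Pplus J (ψ₂ 0) = φp ∧
          Filter.Tendsto (fun x => ‖ψ₂ x‖) Filter.atTop (nhds 0)) →
        Set.EqOn ψ₁ ψ₂ (Set.Ici 0)) := by
  obtain ⟨P, hP, hnonneg⟩ := exists_decaying_projection_of_similarToSelfAdjoint hJ hLpos hsim
  simp only [← tendsto_zero_iff_norm_tendsto_zero]
  refine ⟨?_, ?_⟩
  · obtain ⟨g, hg⟩ := exists_Pplus_apply_eq hJ hnonneg hφp
    obtain ⟨ψ, hψ, hψ0⟩ := hP g
    exact ⟨ψ, hψ.continuousOn, hψ.isStrongSolutionOn, hψ0 ▸ hg, hψ.tendsto⟩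
  · rintro ψ₁ ψ₂ ⟨hcont₁, hsol₁, hφ₁, hlim₁⟩ ⟨hcont₂, hsol₂, hφ₂, hlim₂⟩
    have hdiff : IsDecayingSolution (pmapComp J L) (ψ₁ - ψ₂) :=
      .sub ⟨hcont₁, hsol₁, hlim₁⟩ ⟨hcont₂, hsol₂, hlim₂⟩
    have hφ : Pplus J ((ψ₁ - ψ₂) 0) = 0 := by rw [Pi.sub_apply, map_sub, hφ₁, hφ₂, sub_self]
    have hzero := hdiff.eqOn_zero hJ hLpos (reApplyInnerSelf_nonpos_of_Pplus_eq_zero hφ)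
    exact fun x hx => sub_eq_zero.mp (hzero hx)

end
end

section
/- Let H be a complex Hilbert space, J a signature operator on H, L a densely defined positive self-adjoint operator in H, and B := JL, and assume B is similar to a self-adjoint operator in H. Fix 0 < τ < ∞ and φ₊ ∈ H₊, φ₋ ∈ H₋. Then the strong solution ψ of the boundary value problem dψ/dx = −Bψ(x) (0 < x < τ), P₊ψ(0) = φ₊, P₋ψ(τ) = φ₋ is infinitely (strongly) differentiable on the open interval (0, τ). -/
open scoped ComplexOrder InnerProductSpace

noncomputable section

variable {H : Type*} [NormedAddCommGroup H] [InnerProductSpace ℂ H] [CompleteSpace H]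

/-!
If `u' = -A u` with `A` symmetric, then `⟪u (x + t), u (y - t)⟫` is constant in `t`, so
`⟪u x, u y⟫` depends only on `x + y`. Differentiating in each variable, `v = u'` has the same
property, whence `⟪v (x ± t), v x⟫ = ‖v (x ± t / 2)‖ ^ 2` and
`2 * ‖v x‖ ^ 2 = 2 * ⟪v (x + t / 2), v (x - t / 2)⟫ ≤ ⟪v (x + t) + v (x - t), v x⟫`.
Integrating over `t ∈ [0, r]` gives the interior estimate `2 * r * ‖v x‖ ≤ ‖u (x + r) - u (x - r)‖`.
It also applies to linear combinations of translates of `u`, in particular to the difference of two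
difference quotients of `u`. Those are Cauchy, `u` being differentiable, hence so are the difference
quotients of `u'`: thus `u'` is differentiable and the argument can be iterated. Solutions of
`ψ' = -B ψ` reduce to this case by the similarity.
-/

section

open Filter Metric Topology

section DifferenceQuotient

variable {𝕜 F : Type*} [NontriviallyNormedField 𝕜] [NormedAddCommGroup F] [NormedSpace 𝕜 F]
  {f f' : 𝕜 → F} {h k x : 𝕜}

/-- The difference of the difference quotients of `f` with steps `h` and `k`. By completeness,
differentiability of `f` means that it tends to zero with `h` and `k`. -/
def diffQuotSub (f : 𝕜 → F) (h k x : 𝕜) : F :=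
  h⁻¹ • (f (x + h) - f x) - k⁻¹ • (f (x + k) - f x)

theorem hasDerivAt_diffQuotSub (hx : HasDerivAt f (f' x) x)
    (hh : HasDerivAt f (f' (x + h)) (x + h)) (hk : HasDerivAt f (f' (x + k)) (x + k)) :
    HasDerivAt (diffQuotSub f h k) (diffQuotSub f' h k x) x :=
  (((hh.comp_add_const x h).sub hx).const_smul h⁻¹).sub
    (((hk.comp_add_const x k).sub hx).const_smul k⁻¹)

theorem differentiableAt_iff_tendsto_diffQuotSub [CompleteSpace F] :
    DifferentiableAt 𝕜 f x ↔
      Tendsto (fun p : 𝕜 × 𝕜 => diffQuotSub f p.1 p.2 x) (𝓝[≠] 0 ×ˢ 𝓝[≠] 0) (𝓝 0) := by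
  have hexists : DifferentiableAt 𝕜 f x ↔
      ∃ y, Tendsto (fun t => t⁻¹ • (f (x + t) - f x)) (𝓝[≠] 0) (𝓝 y) := by
    simp only [← hasDerivAt_iff_tendsto_slope_zero]
    exact ⟨fun hf => ⟨_, hf.hasDerivAt⟩, fun ⟨_, hf⟩ => hf.differentiableAt⟩
  rw [hexists, ← cauchy_map_iff_exists_tendsto, cauchy_map_iff,
    tendsto_uniformity_iff_dist_tendsto_zero]
  simp only [dist_eq_norm, ← tendsto_zero_iff_norm_tendsto_zero]
  exact and_iff_right (inferInstance : (𝓝[≠] (0 : 𝕜)).NeBot)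

end DifferenceQuotient

variable {E : Type*} [NormedAddCommGroup E] [InnerProductSpace ℝ E]

/-- The kernel `⟪f x, g y⟫` is a Hankel kernel on `s × t`: it depends only on `x + y`. -/
def IsHankelPairOn (f g : ℝ → E) (s t : Set ℝ) : Prop :=
  ∀ ⦃x⦄, x ∈ s → ∀ ⦃y⦄, y ∈ t → ∀ ⦃x'⦄, x' ∈ s → ∀ ⦃y'⦄, y' ∈ t →
    x + y = x' + y' → inner ℝ (f x) (g y) = inner ℝ (f x') (g y')

namespace IsHankelPairOn

variable {f f' g : ℝ → E} {s s' t : Set ℝ} {x r h k : ℝ}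

theorem symm (hfg : IsHankelPairOn f g s t) : IsHankelPairOn g f t s := by
  intro x hx y hy x' hx' y' hy' hsum
  rw [real_inner_comm, hfg hy hx hy' hx' (by linarith), real_inner_comm]

theorem mono_left (hfg : IsHankelPairOn f g s t) (hs : s' ⊆ s) : IsHankelPairOn f g s' t :=
  fun _ hx _ hy _ hx' _ hy' => hfg (hs hx) hy (hs hx') hy'

theorem diffQuotSub_left (hfg : IsHankelPairOn f g s t) (hs : s' ⊆ s)
    (hh : Set.MapsTo (· + h) s' s) (hk : Set.MapsTo (· + k) s' s) :
    IsHankelPairOn (diffQuotSub f h k) g s' t := by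
  intro x hx y hy x' hx' y' hy' hsum
  simp only [diffQuotSub, inner_sub_left, real_inner_smul_left]
  rw [hfg (hs hx) hy (hs hx') hy' hsum, hfg (hh hx) hy (hh hx') hy' (by linarith),
    hfg (hk hx) hy (hk hx') hy' (by linarith)]

theorem deriv_left (hfg : IsHankelPairOn f g s t) (hs : IsOpen s)
    (hf : ∀ x ∈ s, HasDerivAt f (f' x) x) : IsHankelPairOn f' g s t := by
  intro x hx y hy x' hx' y' hy' hsum
  have hderiv : ∀ z ∈ s, ∀ w, HasDerivAt (fun τ => inner ℝ (f (z + τ)) (g w))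
      (inner ℝ (f' z) (g w)) 0 := fun z hz w => by
    have hz' : HasDerivAt f (f' z) (z + 0) := by simpa only [add_zero] using hf z hz
    simpa using (hz'.comp_const_add z 0).inner ℝ (hasDerivAt_const (0 : ℝ) (g w))
  have hnear : ∀ z ∈ s, ∀ᶠ τ in 𝓝 (0 : ℝ), z + τ ∈ s := fun z hz =>
    (continuous_const_add z).continuousAt.eventually_mem (hs.mem_nhds (by simpa using hz))
  refine (hderiv x hx y).unique ((hderiv x' hx' y').congr_of_eventuallyEq ?_)
  filter_upwards [hnear x hx, hnear x' hx'] with τ hτ hτ'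
  exact hfg hτ hy hτ' hy' (by linarith)

theorem diffQuotSub_self (hf : IsHankelPairOn f f s s) (hs : s' ⊆ s)
    (hh : Set.MapsTo (· + h) s' s) (hk : Set.MapsTo (· + k) s' s) :
    IsHankelPairOn (diffQuotSub f h k) (diffQuotSub f h k) s' s' :=
  (hf.diffQuotSub_left hs hh hk).symm.diffQuotSub_left hs hh hk

theorem deriv_self (hf : IsHankelPairOn f f s s) (hs : IsOpen s)
    (hf' : ∀ x ∈ s, HasDerivAt f (f' x) x) : IsHankelPairOn f' f' s s :=
  (hf.deriv_left hs hf').symm.deriv_left hs hf'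

theorem of_hasDerivAt (hs : IsOpen s) (hconv : Convex ℝ s)
    (hf : ∀ x ∈ s, HasDerivAt f (f' x) x)
    (hsymm : ∀ x ∈ s, ∀ y ∈ s, inner ℝ (f' x) (f y) = inner ℝ (f x) (f' y)) :
    IsHankelPairOn f f s s := by
  intro x hx y hy x' hx' y' hy' hsum
  have hderiv : ∀ τ ∈ s ∩ (x + y - ·) ⁻¹' s,
      HasDerivAt (fun τ => inner ℝ (f τ) (f (x + y - τ))) 0 τ := fun τ ⟨hτ, hτ'⟩ => by
    simpa only [inner_neg_right, ← hsymm τ hτ _ hτ', neg_add_cancel] using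
      (hf τ hτ).inner ℝ ((hf _ hτ').comp_const_sub (x + y) τ)
  have hopen : IsOpen (s ∩ (x + y - ·) ⁻¹' s) := hs.inter (hs.preimage (by fun_prop))
  have hpre : Convex ℝ ((x + y - ·) ⁻¹' s) :=
    hconv.affine_preimage (AffineMap.const ℝ ℝ (x + y) - AffineMap.id ℝ ℝ)
  have hconst := hopen.is_const_of_deriv_eq_zero (hconv.inter hpre).isPreconnected
    (fun τ hτ => (hderiv τ hτ).differentiableAt.differentiableWithinAt)
    (fun τ hτ => (hderiv τ hτ).deriv) (x := x) (y := x') ⟨hx, by simpa using hy⟩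
    ⟨hx', by simpa [hsum] using hy'⟩
  simpa [hsum, eq_sub_of_add_eq' hsum] using hconst

theorem two_mul_norm_sq_le_inner (hf : IsHankelPairOn f f (closedBall x r) (closedBall x r))
    {τ : ℝ} (hτ : |τ| ≤ r) :
    2 * ‖f x‖ ^ 2 ≤ inner ℝ (f (x + τ) + f (x - τ)) (f x) := by
  have hmem : ∀ σ, |σ| ≤ |τ| → x + σ ∈ closedBall x r ∧ x - σ ∈ closedBall x r := fun σ hσ => by
    simpa [Real.dist_eq] using hσ.trans hτ
  obtain ⟨hadd, hsub⟩ := hmem τ le_rfl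
  obtain ⟨hadd', hsub'⟩ := hmem (τ / 2) (by rw [abs_div, abs_two]; linarith [abs_nonneg τ])
  have hx : x ∈ closedBall x r := by simpa using (hmem 0 (by simp)).1
  have hplus : inner ℝ (f (x + τ)) (f x) = ‖f (x + τ / 2)‖ ^ 2 := by
    rw [← real_inner_self_eq_norm_sq, hf hadd hx hadd' hadd' (by ring)]
  have hminus : inner ℝ (f (x - τ)) (f x) = ‖f (x - τ / 2)‖ ^ 2 := by
    rw [← real_inner_self_eq_norm_sq, hf hsub hx hsub' hsub' (by ring)]
  have hcentre : inner ℝ (f (x + τ / 2)) (f (x - τ / 2)) = ‖f x‖ ^ 2 := by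
    rw [← real_inner_self_eq_norm_sq, hf hadd' hsub' hx hx (by ring)]
  rw [inner_add_left, hplus, hminus, ← hcentre]
  linarith [norm_sub_sq_real (f (x + τ / 2)) (f (x - τ / 2)),
    sq_nonneg ‖f (x + τ / 2) - f (x - τ / 2)‖]

theorem two_mul_norm_deriv_le (hf' : IsHankelPairOn f' f' (closedBall x r) (closedBall x r))
    (hr : 0 ≤ r) (hf : ∀ y ∈ closedBall x r, HasDerivAt f (f' y) y) :
    2 * r * ‖f' x‖ ≤ ‖f (x + r) - f (x - r)‖ := by
  have hderiv : ∀ τ ∈ Set.Icc 0 r, HasDerivAt (fun τ => inner ℝ (f (x + τ) - f (x - τ)) (f' x))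
      (inner ℝ (f' (x + τ) + f' (x - τ)) (f' x)) τ := fun τ hτ => by
    have hτr : |τ| ≤ r := by rw [abs_of_nonneg hτ.1]; exact hτ.2
    have hadd := (hf (x + τ) (by simpa [Real.dist_eq] using hτr)).comp_const_add x τ
    have hsub := (hf (x - τ) (by simpa [Real.dist_eq] using hτr)).comp_const_sub x τ
    simpa [sub_neg_eq_add] using (hadd.sub hsub).inner ℝ (hasDerivAt_const τ (f' x))
  have hmean := (convex_Icc 0 r).mul_sub_le_image_sub_of_le_deriv (C := 2 * ‖f' x‖ ^ 2)
    (fun τ hτ => (hderiv τ hτ).continuousAt.continuousWithinAt)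
    (fun τ hτ => (hderiv τ (interior_subset hτ)).differentiableAt.differentiableWithinAt)
    (fun τ hτ => by
      obtain ⟨hτ0, hτr⟩ := interior_subset hτ
      rw [(hderiv τ ⟨hτ0, hτr⟩).deriv]
      exact hf'.two_mul_norm_sq_le_inner (by rwa [abs_of_nonneg hτ0]))
    0 ⟨le_rfl, hr⟩ r ⟨hr, le_rfl⟩ hr
  have hmul : 2 * r * ‖f' x‖ * ‖f' x‖ ≤ ‖f (x + r) - f (x - r)‖ * ‖f' x‖ := by
    refine le_trans ?_ (real_inner_le_norm _ _)
    simp only [sub_zero, add_zero, sub_self, inner_zero_left] at hmean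
    linarith
  rcases (norm_nonneg (f' x)).eq_or_lt with hzero | hpos
  · simp [← hzero]
  · exact le_of_mul_le_mul_right hmul hpos

theorem two_mul_norm_diffQuotSub_deriv_le
    (hf : IsHankelPairOn f f (ball x (2 * r)) (ball x (2 * r)))
    (hf' : ∀ y ∈ ball x (2 * r), HasDerivAt f (f' y) y) (hh : |h| < r) (hk : |k| < r) :
    2 * r * ‖diffQuotSub f' h k x‖ ≤
      ‖diffQuotSub f h k (x + r) - diffQuotSub f h k (x - r)‖ := by
  have hr : 0 < r := (abs_nonneg h).trans_lt hh
  have hball : closedBall x r ⊆ ball x (2 * r) := closedBall_subset_ball (by linarith)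
  have hshift : ∀ σ : ℝ, |σ| < r → Set.MapsTo (· + σ) (closedBall x r) (ball x (2 * r)) :=
    fun σ hσ y hy => by
      rw [mem_closedBall, Real.dist_eq] at hy
      rw [mem_ball, Real.dist_eq, add_sub_right_comm]
      linarith [abs_add_le (y - x) σ]
  have hhankel := (hf.deriv_self isOpen_ball hf').diffQuotSub_self hball
    (hshift h hh) (hshift k hk)
  exact hhankel.two_mul_norm_deriv_le hr.le fun y hy => hasDerivAt_diffQuotSub
    (hf' y (hball hy)) (hf' _ (hshift h hh hy)) (hf' _ (hshift k hk hy))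

theorem differentiableAt_deriv [CompleteSpace E] (hf : IsHankelPairOn f f s s) (hs : IsOpen s)
    (hf' : ∀ x ∈ s, HasDerivAt f (f' x) x) (hx : x ∈ s) : DifferentiableAt ℝ f' x := by
  obtain ⟨ε, hε, hball⟩ := Metric.isOpen_iff.1 hs x hx
  obtain ⟨r, rfl⟩ : ∃ r, ε = 2 * r := ⟨ε / 2, by ring⟩
  have hr : 0 < r := by linarith
  have hcauchy : ∀ y ∈ ball x (2 * r), Tendsto
      (fun p : ℝ × ℝ => diffQuotSub f p.1 p.2 y) (𝓝[≠] 0 ×ˢ 𝓝[≠] 0) (𝓝 0) := fun y hy =>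
    differentiableAt_iff_tendsto_diffQuotSub.1 (hf' y (hball hy)).differentiableAt
  have hends := ((hcauchy (x + r) (by simp [abs_of_pos hr, hr])).sub
    (hcauchy (x - r) (by simp [abs_of_pos hr, hr]))).norm.const_mul (2 * r)⁻¹
  rw [sub_zero, norm_zero, mul_zero] at hends
  have hsmall : ∀ᶠ τ in 𝓝[≠] (0 : ℝ), |τ| < r :=
    (continuous_abs.continuousAt.eventually_lt_const (by simpa using hr)).filter_mono
      nhdsWithin_le_nhds
  refine differentiableAt_iff_tendsto_diffQuotSub.2 (squeeze_zero_norm' ?_ hends)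
  filter_upwards [hsmall.prod_mk hsmall] with p hp
  rw [le_inv_mul_iff₀ (by positivity)]
  exact ((hf.mono_left hball).symm.mono_left hball).two_mul_norm_diffQuotSub_deriv_le
    (fun y hy => hf' y (hball hy)) hp.1 hp.2

theorem contDiffOn [CompleteSpace E] (hf : IsHankelPairOn f f s s) (hs : IsOpen s)
    (hdiff : DifferentiableOn ℝ f s) : ContDiffOn ℝ (⊤ : ℕ∞) f s := by
  refine contDiffOn_infty.2 fun n => ?_
  induction n generalizing f with
  | zero => exact contDiffOn_zero.2 hdiff.continuousOn
  | succ n ih =>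
    have hderiv : ∀ x ∈ s, HasDerivAt f (deriv f x) x := fun x hx =>
      (hdiff.differentiableAt (hs.mem_nhds hx)).hasDerivAt
    push_cast
    exact (contDiffOn_succ_iff_deriv_of_isOpen hs).2 ⟨hdiff, by simp,
      ih (hf.deriv_self hs hderiv) fun x hx =>
        (hf.differentiableAt_deriv hs hderiv hx).differentiableWithinAt⟩

end IsHankelPairOn

theorem contDiffOn_of_inner_deriv_comm [CompleteSpace E] {u v : ℝ → E} {s : Set ℝ}
    (hs : IsOpen s) (hu : ∀ x ∈ s, HasDerivAt u (v x) x)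
    (hsymm : ∀ x ∈ s, ∀ y ∈ s, inner ℝ (v x) (u y) = inner ℝ (u x) (v y)) :
    ContDiffOn ℝ (⊤ : ℕ∞) u s := by
  intro x hx
  obtain ⟨ε, hε, hball⟩ := Metric.isOpen_iff.1 hs x hx
  have hu' : ∀ y ∈ ball x ε, HasDerivAt u (v y) y := fun y hy => hu y (hball hy)
  have hhankel : IsHankelPairOn u u (ball x ε) (ball x ε) :=
    .of_hasDerivAt isOpen_ball (convex_ball x ε) hu'
      fun y hy z hz => hsymm y (hball hy) z (hball hz)
  have hsmooth := hhankel.contDiffOn isOpen_ball fun y hy =>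
    (hu' y hy).differentiableAt.differentiableWithinAt
  exact (hsmooth.contDiffAt (ball_mem_nhds x hε)).contDiffWithinAt

end

theorem contDiffOn_of_hasDerivAt_neg_isFormalAdjoint {A : H →ₗ.[ℂ] H} (hA : A.IsFormalAdjoint A)
    {u : ℝ → H} {s : Set ℝ} (hs : IsOpen s)
    (hu : ∀ x ∈ s, ∃ hx : u x ∈ A.domain, HasDerivAt u (-A ⟨u x, hx⟩) x) :
    ContDiffOn ℝ (⊤ : ℕ∞) u s := by
  let _ : InnerProductSpace ℝ H := InnerProductSpace.complexToReal
  choose hmem hderiv using hu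
  refine contDiffOn_of_inner_deriv_comm hs (v := deriv u)
    (fun x hx => (hderiv x hx).differentiableAt.hasDerivAt) fun x hx y hy => ?_
  rw [(hderiv x hx).deriv, (hderiv y hy).deriv, inner_neg_left, inner_neg_right]
  exact congrArg (fun z : ℂ => -z.re) (hA ⟨u x, hmem x hx⟩ ⟨u y, hmem y hy⟩)

theorem isFormalAdjoint_self_of_isSelfAdjoint {𝕜 E : Type*} [RCLike 𝕜] [NormedAddCommGroup E]
    [InnerProductSpace 𝕜 E] [CompleteSpace E] {A : E →ₗ.[𝕜] E} (hA : IsSelfAdjoint A) :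
    A.IsFormalAdjoint A := by
  simpa only [LinearPMap.isSelfAdjoint_def.1 hA] using
    LinearPMap.adjoint_isFormalAdjoint hA.dense_domain

theorem statement4_general {B : H →ₗ.[ℂ] H} (hB : SimilarToSelfAdjoint B) {ψ : ℝ → H} {s : Set ℝ}
    (hs : IsOpen s) (hψ : IsStrongSolutionOn B (fun _ => 0) ψ s) :
    ContDiffOn ℝ (⊤ : ℕ∞) ψ s := by
  obtain ⟨S, A, hA, hdom, hSA⟩ := hB
  obtain ⟨ψ', -, hψ⟩ := hψ
  have hSψ : ContDiffOn ℝ (⊤ : ℕ∞) (fun x => S (ψ x)) s := by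
    refine contDiffOn_of_hasDerivAt_neg_isFormalAdjoint
      (isFormalAdjoint_self_of_isSelfAdjoint hA) hs fun x hx => ?_
    obtain ⟨hderiv, hxB, heq⟩ := hψ x hx
    have hxA : S (ψ x) ∈ (A.domain : Set H) := hdom ▸ ⟨ψ x, hxB, rfl⟩
    refine ⟨hxA, ?_⟩
    rw [hSA ⟨ψ x, hxB⟩ hxA, ← map_neg, ← add_zero (-B _), ← heq]
    exact ((S : H →L[ℂ] H).restrictScalars ℝ).hasFDerivAt.comp_hasDerivAt x hderiv
  simpa [Function.comp_def] using
    ((S.symm : H →L[ℂ] H).restrictScalars ℝ).contDiff.comp_contDiffOn hSψ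

/-- Smoothness: under the assumptions of Theorem 2.1 the strong solution of
the boundary value problem is infinitely (strongly) differentiable on `(0, τ)`. -/
theorem statement4 (J : H →L[ℂ] H) (hJ : IsSignatureOperator J)
    (L : H →ₗ.[ℂ] H) (hdense : Dense (L.domain : Set H))
    (hLsa : IsSelfAdjoint L) (hLpos : IsPositivePMap L)
    (hsim : SimilarToSelfAdjoint (pmapComp J L))
    (τ : ℝ) (hτ : 0 < τ)
    (φp φm : H) (hφp : J φp = φp) (hφm : J φm = -φm)
    (ψ : ℝ → H)
    (hcont : ContinuousOn ψ (Set.Icc 0 τ))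
    (hsol : IsStrongSolutionOn (pmapComp J L) (fun _ => 0) ψ (Set.Ioo 0 τ))
    (hbc0 : Pplus J (ψ 0) = φp) (hbcτ : Pminus J (ψ τ) = φm) :
    ContDiffOn ℝ (⊤ : ℕ∞) ψ (Set.Ioo 0 τ) := by
  exact statement4_general hsim isOpen_Ioo hsol

end
end
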